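/- Assume n ≥ 3. For λ > 0 let φ_λ be the function on V with φ_λ(1) = −1 satisfying the positive-part recursion with parameter λ. Then (λ − λ^G_{π,ν}) · π(φ_λ) > 0 for every λ > 0 with λ ≠ λ^G_{π,ν}. -/

import Mathlib

open Finset

/-- Dirichlet form on the path with vertices `{1,…,n}`;
`ν i` denotes the weight of edge `{i, i+1}`. -/
noncomputable def EForm (n : ℕ) (ν : ℕ → ℝ) (f g : ℕ → ℝ) : ℝ :=
  ∑ i ∈ Finset.Icc 1 (n - 1), (f i - f (i + 1)) * (g i - g (i + 1)) * ν i

/-- Mean of `f` with respect to `π` on `{1,…,n}`. -/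
noncomputable def piMean (n : ℕ) (π : ℕ → ℝ) (f : ℕ → ℝ) : ℝ :=
  ∑ i ∈ Finset.Icc 1 n, f i * π i

/-- Variance of `f` with respect to `π` on `{1,…,n}`. -/
noncomputable def varPi (n : ℕ) (π : ℕ → ℝ) (f : ℕ → ℝ) : ℝ :=
  piMean n π (fun i => (f i) ^ 2) - (piMean n π f) ^ 2

/-- `f` is non-constant on `{1,…,n}`. -/
def Nonconstant (n : ℕ) (f : ℕ → ℝ) : Prop :=
  ∃ i ∈ Finset.Icc 1 n, ∃ j ∈ Finset.Icc 1 n, f i ≠ f j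

/-- `lam` is the spectral gap: the minimum of the Rayleigh quotients over
non-constant functions. -/
def IsSpectralGap (n : ℕ) (π ν : ℕ → ℝ) (lam : ℝ) : Prop :=
  IsLeast {r : ℝ | ∃ f : ℕ → ℝ, Nonconstant n f ∧ r = EForm n ν f f / varPi n π f} lam

/-- The positive-part recursion with parameter `lam`:
`ψ(i+1) = ψ(i) + max{[ψ(i)−ψ(i−1)]ν(i−1,i) − λ π(i) ψ(i), 0}/ν(i,i+1)` for `1 ≤ i < n`. -/
def PosPartRec (n : ℕ) (π ν : ℕ → ℝ) (lam : ℝ) (ψ : ℕ → ℝ) : Prop :=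
  ∀ i, 1 ≤ i → i < n →
    ψ (i + 1) = ψ i + max ((ψ i - ψ (i - 1)) * ν (i - 1) - lam * (π i * ψ i)) 0 / ν i

/-!
The partial sum `S m = ∑ i ≤ m, φ i * π i` is `piMean m π φ`, and `F m = (φ (m + 1) - φ m) * ν m` is
the flux. Without the positive part, the recursion would say exactly `F m = -λ * S m`. In general
`φ` is nondecreasing, `F m ≥ -λ * S m`, and `F m = 0` wherever equality fails. Summation by parts
turns these relations into bounds on the gap from both sides:

* By complementarity `E(φ, φ) = λ * (Var φ - (φ n - S n) * S n)`, so the test function `φ` shows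
  `gap ≤ λ` if `S n ≥ 0`, strictly if `S n > 0`.
* If `S n ≤ 0`, then `S m < 0` for `1 ≤ m < n`, hence `φ` is strictly increasing. For any `f`, let
  `H` be the primitive of `(f')² / φ'`. Cauchy–Schwarz gives `Var f ≤ Cov(φ, H)`, and by parts
  `λ * Cov(φ, H) ≤ λ * S n * (H n - π(H)) + E(f, f)`, so `λ ≤ gap`, strictly if `S n < 0`.
-/

section Covariance

lemma sum_sum_mul_sub_mul_sub {ι R : Type*} [CommRing R] (s : Finset ι) (w a b : ι → R) :
    ∑ i ∈ s, ∑ j ∈ s, w i * w j * ((a i - a j) * (b i - b j)) =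
      2 * ((∑ i ∈ s, w i) * (∑ i ∈ s, a i * b i * w i) -
        (∑ i ∈ s, a i * w i) * ∑ i ∈ s, b i * w i) := by
  have expand (i j : ι) : w i * w j * ((a i - a j) * (b i - b j)) =
      (a i * b i * w i) * w j + w i * (a j * b j * w j) -
        (a i * w i) * (b j * w j) - (b i * w i) * (a j * w j) := by ring
  simp only [expand, sum_add_distrib, sum_sub_distrib, ← sum_mul_sum]
  ring

variable {n : ℕ} {π f g h : ℕ → ℝ}

/-- Covariance of `f` and `g` with respect to `π` on `{1,…,n}`, the bilinear form polarizing
`varPi`. -/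
noncomputable def covPi (n : ℕ) (π f g : ℕ → ℝ) : ℝ :=
  piMean n π (fun i => f i * g i) - piMean n π f * piMean n π g

lemma covPi_self (n : ℕ) (π f : ℕ → ℝ) : covPi n π f f = varPi n π f := by
  simp only [covPi, varPi, sq]

lemma two_mul_covPi (hπ1 : ∑ i ∈ Icc 1 n, π i = 1) :
    2 * covPi n π f g =
      ∑ i ∈ Icc 1 n, ∑ j ∈ Icc 1 n, π i * π j * ((f i - f j) * (g i - g j)) := by
  rw [sum_sum_mul_sub_mul_sub, hπ1, one_mul]
  rfl

lemma varPi_pos (hπ : ∀ i ∈ Icc 1 n, 0 < π i) (hπ1 : ∑ i ∈ Icc 1 n, π i = 1)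
    (hf : Nonconstant n f) : 0 < varPi n π f := by
  obtain ⟨i, hi, j, hj, hij⟩ := hf
  have term_nonneg : ∀ i ∈ Icc 1 n, ∀ j ∈ Icc 1 n,
      0 ≤ π i * π j * ((f i - f j) * (f i - f j)) := fun i hi j hj =>
    mul_nonneg (mul_pos (hπ i hi) (hπ j hj)).le (mul_self_nonneg _)
  have term_pos : 0 < π i * π j * ((f i - f j) * (f i - f j)) :=
    mul_pos (mul_pos (hπ i hi) (hπ j hj)) (mul_self_pos.2 (sub_ne_zero.2 hij))
  rw [← mul_pos_iff_of_pos_left two_pos, ← covPi_self, two_mul_covPi hπ1]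
  exact sum_pos' (fun i hi => sum_nonneg (term_nonneg i hi))
    ⟨i, hi, sum_pos' (term_nonneg i hi) ⟨j, hj, term_pos⟩⟩

lemma varPi_le_covPi (hπ : ∀ i ∈ Icc 1 n, 0 ≤ π i) (hπ1 : ∑ i ∈ Icc 1 n, π i = 1)
    (hfgh : ∀ i ∈ Icc 1 n, ∀ j ∈ Icc 1 n, i ≤ j →
      (f j - f i) ^ 2 ≤ (g j - g i) * (h j - h i)) :
    varPi n π f ≤ covPi n π g h := by
  rw [← mul_le_mul_iff_right₀ two_pos, ← covPi_self, two_mul_covPi hπ1, two_mul_covPi hπ1]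
  refine sum_le_sum fun i hi => sum_le_sum fun j hj =>
    mul_le_mul_of_nonneg_left ?_ (mul_nonneg (hπ i hi) (hπ j hj))
  rcases le_total i j with hij | hji
  · linarith [hfgh i hi j hj hij]
  · linarith [hfgh j hj i hi hji]

end Covariance

section Mean

variable {n : ℕ} {π f : ℕ → ℝ}

lemma piMean_zero (π f : ℕ → ℝ) : piMean 0 π f = 0 := rfl

lemma piMean_succ (n : ℕ) (π f : ℕ → ℝ) :
    piMean (n + 1) π f = piMean n π f + f (n + 1) * π (n + 1) :=
  sum_Icc_succ_top (Nat.le_add_left 1 n) _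

lemma covPi_by_parts (n : ℕ) (π f g : ℕ → ℝ) :
    covPi n π f g = piMean n π f * (g n - piMean n π g) -
      ∑ m ∈ Icc 1 (n - 1), piMean m π f * (g (m + 1) - g m) := by
  suffices abel : piMean n π (fun i => f i * g i) =
      piMean n π f * g n - ∑ m ∈ Icc 1 (n - 1), piMean m π f * (g (m + 1) - g m) by
    rw [covPi, abel]; ring
  cases n with
  | zero => simp [piMean_zero]
  | succ m =>
    rw [Nat.add_sub_cancel]
    induction m with
    | zero => simp [piMean]; ring
    | succ m ih =>
      rw [piMean_succ, ih, sum_Icc_succ_top (Nat.le_add_left 1 m), piMean_succ (m + 1) π f]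
      ring

lemma piMean_eq_of_not_nonconstant (hπ1 : ∑ i ∈ Icc 1 n, π i = 1) (hf : ¬ Nonconstant n f) :
    piMean n π f = f 1 := by
  have eq_one : ∀ i ∈ Icc 1 n, f i = f 1 := by
    intro i hi
    by_contra hne
    have one_mem : 1 ∈ Icc 1 n := left_mem_Icc.2 ((mem_Icc.1 hi).1.trans (mem_Icc.1 hi).2)
    exact hf ⟨i, hi, 1, one_mem, hne⟩
  calc piMean n π f = ∑ i ∈ Icc 1 n, f 1 * π i :=
        sum_congr rfl fun i hi => by rw [eq_one i hi]
    _ = f 1 := by rw [← mul_sum, hπ1, mul_one]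

lemma Nonconstant.apply_one_lt (hf : Nonconstant n f) (hmono : MonotoneOn f (Set.Icc 1 n)) :
    f 1 < f n := by
  obtain ⟨i, hi, j, hj, hij⟩ := hf
  rw [mem_Icc] at hi hj
  have bounds (k : ℕ) (hk : 1 ≤ k ∧ k ≤ n) : f 1 ≤ f k ∧ f k ≤ f n :=
    ⟨hmono ⟨le_rfl, hk.1.trans hk.2⟩ hk hk.1, hmono hk ⟨hk.1.trans hk.2, le_rfl⟩ hk.2⟩
  by_contra! hle
  exact hij (by linarith [bounds i hi, bounds j hj])

lemma piMean_lt_apply_of_monotoneOn (hπ : ∀ i ∈ Icc 1 n, 0 < π i)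
    (hπ1 : ∑ i ∈ Icc 1 n, π i = 1) (hf : Nonconstant n f) (hmono : MonotoneOn f (Set.Icc 1 n)) :
    piMean n π f < f n := by
  have hn : 1 ≤ n := by
    obtain ⟨i, hi, -⟩ := hf
    exact (mem_Icc.1 hi).1.trans (mem_Icc.1 hi).2
  have one_mem : 1 ∈ Icc 1 n := left_mem_Icc.2 hn
  calc piMean n π f < ∑ i ∈ Icc 1 n, f n * π i := by
        refine sum_lt_sum (fun i hi => ?_)
          ⟨1, one_mem, mul_lt_mul_of_pos_right (hf.apply_one_lt hmono) (hπ 1 one_mem)⟩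
        have hi' := mem_Icc.1 hi
        exact mul_le_mul_of_nonneg_right (hmono hi' ⟨hn, le_rfl⟩ hi'.2) (hπ i hi).le
    _ = f n := by rw [← mul_sum, hπ1, mul_one]

lemma piMean_neg_of_monotoneOn (hπ : ∀ i ∈ Icc 1 n, 0 < π i) (hmono : MonotoneOn f (Set.Icc 1 n))
    (hf1 : f 1 < 0) (hmean : piMean n π f ≤ 0) {m : ℕ} (hm : 1 ≤ m) (hmn : m < n) :
    piMean m π f < 0 := by
  have hπ' {i : ℕ} (h1 : 1 ≤ i) (hn : i ≤ n) : 0 < π i := hπ i (mem_Icc.2 ⟨h1, hn⟩)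
  rcases le_or_gt (f m) 0 with hfm | hfm
  · refine sum_neg' (fun i hi => ?_)
      ⟨1, left_mem_Icc.2 hm, mul_neg_of_neg_of_pos hf1 (hπ' le_rfl (hm.trans hmn.le))⟩
    obtain ⟨h1i, him⟩ := mem_Icc.1 hi
    have hfi : f i ≤ f m := hmono ⟨h1i, him.trans hmn.le⟩ ⟨hm, hmn.le⟩ him
    exact mul_nonpos_of_nonpos_of_nonneg (hfi.trans hfm) (hπ' h1i (him.trans hmn.le)).le
  · refine lt_of_lt_of_le ?_ hmean
    refine sum_lt_sum_of_subset (Icc_subset_Icc_right hmn.le) (right_mem_Icc.2 (hm.trans hmn.le))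
      (by simp [hmn]) ?_ ?_
    · exact mul_pos (hfm.trans_le (hmono ⟨hm, hmn.le⟩ ⟨hm.trans hmn.le, le_rfl⟩ hmn.le))
        (hπ' (hm.trans hmn.le) le_rfl)
    · intro j hj hjm
      rw [mem_Icc] at hj hjm
      have hmj : m ≤ j := by omega
      exact mul_nonneg (hfm.le.trans (hmono ⟨hm, hmn.le⟩ hj hmj)) (hπ' hj.1 hj.2).le

end Mean

section SpectralGap

variable {n : ℕ} {π ν f : ℕ → ℝ} {gap : ℝ}

lemma IsSpectralGap.mul_varPi_le (hgap : IsSpectralGap n π ν gap)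
    (hπ : ∀ i ∈ Icc 1 n, 0 < π i) (hπ1 : ∑ i ∈ Icc 1 n, π i = 1) (hf : Nonconstant n f) :
    gap * varPi n π f ≤ EForm n ν f f :=
  (le_div_iff₀ (varPi_pos hπ hπ1 hf)).1 (hgap.2 ⟨f, hf, rfl⟩)

lemma IsSpectralGap.exists_EForm_eq (hgap : IsSpectralGap n π ν gap)
    (hπ : ∀ i ∈ Icc 1 n, 0 < π i) (hπ1 : ∑ i ∈ Icc 1 n, π i = 1) :
    ∃ f, Nonconstant n f ∧ EForm n ν f f = gap * varPi n π f := by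
  obtain ⟨f, hf, hgf⟩ := hgap.1
  exact ⟨f, hf, ((eq_div_iff (varPi_pos hπ hπ1 hf).ne').1 hgf).symm⟩

end SpectralGap

section EnergyAlong

variable {n : ℕ} {φ : ℕ → ℝ}

/-- The primitive `H` of `(f')² / φ'` vanishing at `1`, in discrete form. It is the comparison
function in the lower bound on the gap; it is meant for strictly increasing `φ`, since a
vanishing increment of `φ` contributes the junk value `0`. -/
noncomputable def energyAlong (φ f : ℕ → ℝ) (m : ℕ) : ℝ :=
  ∑ k ∈ Ico 1 m, (f (k + 1) - f k) ^ 2 / (φ (k + 1) - φ k)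

lemma energyAlong_sub (φ f : ℕ → ℝ) {i j : ℕ} (hi : 1 ≤ i) (hij : i ≤ j) :
    energyAlong φ f j - energyAlong φ f i =
      ∑ k ∈ Ico i j, (f (k + 1) - f k) ^ 2 / (φ (k + 1) - φ k) := by
  rw [energyAlong, energyAlong, ← sum_Ico_consecutive _ hi hij, add_sub_cancel_left]

lemma sub_pos_of_strictMonoOn_Icc (hφ : StrictMonoOn φ (Set.Icc 1 n)) {k : ℕ} (hk : 1 ≤ k)
    (hkn : k < n) : 0 < φ (k + 1) - φ k :=
  sub_pos.2 (hφ ⟨hk, hkn.le⟩ ⟨by omega, hkn⟩ k.lt_succ_self)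

lemma monotoneOn_energyAlong (hφ : StrictMonoOn φ (Set.Icc 1 n)) (f : ℕ → ℝ) :
    MonotoneOn (energyAlong φ f) (Set.Icc 1 n) := by
  intro i hi j hj hij
  rw [← sub_nonneg, energyAlong_sub φ f hi.1 hij]
  refine sum_nonneg fun k hk => ?_
  obtain ⟨hik, hkj⟩ := mem_Ico.1 hk
  exact div_nonneg (sq_nonneg _)
    (sub_pos_of_strictMonoOn_Icc hφ (hi.1.trans hik) (hkj.trans_le hj.2)).le

lemma sq_sub_le_mul_energyAlong_sub (hφ : StrictMonoOn φ (Set.Icc 1 n)) (f : ℕ → ℝ) {i j : ℕ}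
    (hi : 1 ≤ i) (hij : i ≤ j) (hj : j ≤ n) :
    (f j - f i) ^ 2 ≤ (φ j - φ i) * (energyAlong φ f j - energyAlong φ f i) := by
  rcases hij.eq_or_lt with rfl | hlt
  · simp
  have hpos : 0 < φ j - φ i := sub_pos.2 (hφ ⟨hi, hij.trans hj⟩ ⟨hi.trans hij, hj⟩ hlt)
  have cauchy_schwarz := sq_sum_div_le_sum_sq_div (Ico i j) (fun k => f (k + 1) - f k)
    (g := fun k => φ (k + 1) - φ k) fun k hk =>
      sub_pos_of_strictMonoOn_Icc hφ (hi.trans (mem_Ico.1 hk).1) ((mem_Ico.1 hk).2.trans_le hj)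
  rw [sum_Ico_sub _ hij, sum_Ico_sub _ hij, ← energyAlong_sub φ f hi hij] at cauchy_schwarz
  rwa [mul_comm, ← div_le_iff₀ hpos]

lemma Nonconstant.energyAlong {f : ℕ → ℝ} (hf : Nonconstant n f)
    (hφ : StrictMonoOn φ (Set.Icc 1 n)) : Nonconstant n (energyAlong φ f) := by
  obtain ⟨i, hi, j, hj, hij⟩ := hf
  refine ⟨i, hi, j, hj, fun heq => hij ?_⟩
  wlog hle : i ≤ j generalizing i j
  · exact (this j hj i hi hij.symm heq.symm (le_of_not_ge hle)).symm
  have hsq := sq_sub_le_mul_energyAlong_sub hφ f (mem_Icc.1 hi).1 hle (mem_Icc.1 hj).2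
  rw [heq, sub_self, mul_zero] at hsq
  exact (sub_eq_zero.1 (pow_eq_zero_iff two_ne_zero |>.1 (hsq.antisymm (sq_nonneg _)))).symm

end EnergyAlong

section Flux

variable {n : ℕ} {π ν φ : ℕ → ℝ} {lam : ℝ}

/-- The flux of `φ` from `m` to `m + 1`, the increment weighted by `ν`. In terms of it the
recursion has order one. -/
def flux (ν φ : ℕ → ℝ) (m : ℕ) : ℝ := (φ (m + 1) - φ m) * ν m

lemma EForm_self_eq_sum_flux (n : ℕ) (ν φ : ℕ → ℝ) :
    EForm n ν φ φ = ∑ m ∈ Icc 1 (n - 1), flux ν φ m * (φ (m + 1) - φ m) :=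
  sum_congr rfl fun m _ => by rw [flux]; ring

lemma mul_covPi_energyAlong_le (hφ : StrictMonoOn φ (Set.Icc 1 n))
    (hflux : ∀ m ∈ Icc 1 (n - 1), -lam * piMean m π φ ≤ flux ν φ m) (f : ℕ → ℝ) :
    lam * covPi n π φ (energyAlong φ f) ≤
      lam * (piMean n π φ * (energyAlong φ f n - piMean n π (energyAlong φ f))) +
        EForm n ν f f := by
  suffices edges : ∑ m ∈ Icc 1 (n - 1),
      -lam * piMean m π φ * (energyAlong φ f (m + 1) - energyAlong φ f m) ≤ EForm n ν f f by
    simp only [mul_assoc, ← mul_sum] at edges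
    rw [covPi_by_parts]
    linarith
  refine sum_le_sum fun m hm => ?_
  obtain ⟨h1m, hmn⟩ : 1 ≤ m ∧ m < n := by rw [mem_Icc] at hm; omega
  have hinc : 0 < φ (m + 1) - φ m := sub_pos_of_strictMonoOn_Icc hφ h1m hmn
  rw [energyAlong_sub φ f h1m m.le_succ, Nat.Ico_succ_singleton, sum_singleton]
  calc -lam * piMean m π φ * ((f (m + 1) - f m) ^ 2 / (φ (m + 1) - φ m))
      ≤ flux ν φ m * ((f (m + 1) - f m) ^ 2 / (φ (m + 1) - φ m)) :=
        mul_le_mul_of_nonneg_right (hflux m hm) (by positivity)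
    _ = (f m - f (m + 1)) * (f m - f (m + 1)) * ν m := by rw [flux]; field_simp; ring

theorem exists_mul_le_EForm (hπ : ∀ i ∈ Icc 1 n, 0 < π i) (hπ1 : ∑ i ∈ Icc 1 n, π i = 1)
    (hlam : 0 ≤ lam) (hφ : StrictMonoOn φ (Set.Icc 1 n))
    (hflux : ∀ m ∈ Icc 1 (n - 1), -lam * piMean m π φ ≤ flux ν φ m) {f : ℕ → ℝ}
    (hf : Nonconstant n f) :
    ∃ c > 0, lam * (varPi n π f - c * piMean n π φ) ≤ EForm n ν f f := by
  have mean_lt : piMean n π (energyAlong φ f) < energyAlong φ f n :=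
    piMean_lt_apply_of_monotoneOn hπ hπ1 (hf.energyAlong hφ) (monotoneOn_energyAlong hφ f)
  have var_le : varPi n π f ≤ covPi n π φ (energyAlong φ f) :=
    varPi_le_covPi (fun i hi => (hπ i hi).le) hπ1 fun i hi j hj hij =>
      sq_sub_le_mul_energyAlong_sub hφ f (mem_Icc.1 hi).1 hij (mem_Icc.1 hj).2
  refine ⟨_, sub_pos.2 mean_lt, ?_⟩
  linarith [mul_le_mul_of_nonneg_left var_le hlam, mul_covPi_energyAlong_le hφ hflux f]

end Flux

namespace PosPartRec

variable {n : ℕ} {π ν φ : ℕ → ℝ} {lam : ℝ}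

lemma flux_succ (hrec : PosPartRec n π ν lam φ) (hν : ∀ i ∈ Icc 1 (n - 1), 0 < ν i) {m : ℕ}
    (hm : m + 1 < n) :
    flux ν φ (m + 1) = max (flux ν φ m - lam * (π (m + 1) * φ (m + 1))) 0 := by
  have hνm : 0 < ν (m + 1) := hν _ (mem_Icc.2 ⟨by omega, by omega⟩)
  rw [flux, hrec (m + 1) (by omega) hm, add_sub_cancel_left, div_mul_cancel₀ _ hνm.ne',
    Nat.add_sub_cancel, flux]

lemma flux_nonneg (hrec : PosPartRec n π ν lam φ) (hν : ∀ i ∈ Icc 1 (n - 1), 0 < ν i)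
    {m : ℕ} (h1m : 1 ≤ m) (hmn : m < n) : 0 ≤ flux ν φ m := by
  obtain ⟨k, rfl⟩ := Nat.exists_eq_add_of_le' h1m
  exact hrec.flux_succ hν hmn ▸ le_max_right _ _

lemma monotoneOn (hrec : PosPartRec n π ν lam φ) (hν : ∀ i ∈ Icc 1 (n - 1), 0 < ν i) :
    MonotoneOn φ (Set.Icc 1 n) := by
  refine monotoneOn_of_le_add_one Set.ordConnected_Icc fun m _ hm hm' => ?_
  have hνm : 0 < ν m := hν m (mem_Icc.2 ⟨hm.1, Nat.le_sub_one_of_lt hm'.2⟩)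
  exact sub_nonneg.1 (nonneg_of_mul_nonneg_left (hrec.flux_nonneg hν hm.1 hm'.2) hνm)

lemma neg_mul_piMean_le_flux (hrec : PosPartRec n π ν lam φ)
    (hν : ∀ i ∈ Icc 1 (n - 1), 0 < ν i) (hν0 : ν 0 = 0) {m : ℕ} (hm : m < n) :
    -lam * piMean m π φ ≤ flux ν φ m := by
  induction m with
  | zero => simp [piMean_zero, flux, hν0]
  | succ m ih =>
    rw [hrec.flux_succ hν hm, piMean_succ]
    exact le_max_of_le_left (by linarith [ih (by omega)])

lemma flux_eq_neg_mul_piMean_or_eq_zero (hrec : PosPartRec n π ν lam φ)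
    (hπ : ∀ i ∈ Icc 1 n, 0 < π i) (hν : ∀ i ∈ Icc 1 (n - 1), 0 < ν i) (hν0 : ν 0 = 0)
    (hlam : 0 < lam) {m : ℕ} (hm : m < n) :
    flux ν φ m = -lam * piMean m π φ ∨ flux ν φ m = 0 := by
  -- Positivity of `φ` is what makes the flux stay zero once it has been cut off.
  suffices 0 ≤ flux ν φ m ∧ flux ν φ m = -lam * piMean m π φ ∨
      1 ≤ m ∧ flux ν φ m = 0 ∧ 0 < φ m from
    this.imp (fun h => h.2) fun h => h.2.1
  induction m with
  | zero => simp [piMean_zero, flux, hν0]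
  | succ m ih =>
    have hπm : 0 < π (m + 1) := hπ _ (mem_Icc.2 ⟨by omega, hm.le⟩)
    rw [hrec.flux_succ hν hm]
    rcases ih (by omega) with ⟨hflux, heq⟩ | ⟨h1m, hzero, hφm⟩
    · rcases le_or_gt 0 (flux ν φ m - lam * (π (m + 1) * φ (m + 1))) with hnn | hneg
      · left
        rw [max_eq_left hnn]
        exact ⟨hnn, by rw [heq, piMean_succ]; ring⟩
      · right
        have hpos : 0 < lam * π (m + 1) * φ (m + 1) := by linarith
        exact ⟨by omega, max_eq_right hneg.le, pos_of_mul_pos_right hpos (mul_pos hlam hπm).le⟩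
    · right
      have hφm' : 0 < φ (m + 1) :=
        hφm.trans_le (hrec.monotoneOn hν ⟨h1m, by omega⟩ ⟨by omega, hm.le⟩ m.le_succ)
      refine ⟨by omega, max_eq_right ?_, hφm'⟩
      rw [hzero, zero_sub, neg_nonpos]
      positivity

lemma EForm_self (hrec : PosPartRec n π ν lam φ)
    (hπ : ∀ i ∈ Icc 1 n, 0 < π i) (hν : ∀ i ∈ Icc 1 (n - 1), 0 < ν i) (hν0 : ν 0 = 0)
    (hlam : 0 < lam) :
    EForm n ν φ φ = lam * (varPi n π φ - (φ n - piMean n π φ) * piMean n π φ) := by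
  have edge : ∀ m ∈ Icc 1 (n - 1),
      flux ν φ m * (φ (m + 1) - φ m) = -lam * (piMean m π φ * (φ (m + 1) - φ m)) := by
    intro m hm
    have hmn : m < n := by rw [mem_Icc] at hm; omega
    rcases hrec.flux_eq_neg_mul_piMean_or_eq_zero hπ hν hν0 hlam hmn with heq | hzero
    · rw [heq, mul_assoc]
    · have hinc : φ (m + 1) - φ m = 0 := (mul_eq_zero.1 hzero).resolve_right (hν m hm).ne'
      rw [hinc, mul_zero, mul_zero, mul_zero]
  rw [EForm_self_eq_sum_flux, sum_congr rfl edge, ← mul_sum, ← covPi_self, covPi_by_parts]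
  ring

lemma strictMonoOn (hrec : PosPartRec n π ν lam φ)
    (hπ : ∀ i ∈ Icc 1 n, 0 < π i) (hν : ∀ i ∈ Icc 1 (n - 1), 0 < ν i) (hν0 : ν 0 = 0)
    (hlam : 0 < lam) (hφ1 : φ 1 < 0) (hmean : piMean n π φ ≤ 0) :
    StrictMonoOn φ (Set.Icc 1 n) := by
  refine strictMonoOn_of_lt_add_one Set.ordConnected_Icc fun m _ hm hm' => ?_
  have hneg : piMean m π φ < 0 :=
    piMean_neg_of_monotoneOn hπ (hrec.monotoneOn hν) hφ1 hmean hm.1 hm'.2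
  have hflux : 0 < flux ν φ m :=
    (mul_pos_of_neg_of_neg (neg_neg_of_pos hlam) hneg).trans_le
      (hrec.neg_mul_piMean_le_flux hν hν0 hm'.2)
  have hνm : 0 < ν m := hν m (mem_Icc.2 ⟨hm.1, Nat.le_sub_one_of_lt hm'.2⟩)
  exact sub_pos.1 (pos_of_mul_pos_left hflux hνm.le)

variable {gap : ℝ}

theorem exists_mul_piMean_le_sub_gap (hrec : PosPartRec n π ν lam φ)
    (hπ : ∀ i ∈ Icc 1 n, 0 < π i) (hπ1 : ∑ i ∈ Icc 1 n, π i = 1)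
    (hν : ∀ i ∈ Icc 1 (n - 1), 0 < ν i) (hν0 : ν 0 = 0) (hgap : IsSpectralGap n π ν gap)
    (hlam : 0 < lam) (hφ1 : φ 1 < 0) (hmean : 0 ≤ piMean n π φ) :
    ∃ c > 0, c * piMean n π φ ≤ lam - gap := by
  have hφ : Nonconstant n φ := by
    by_contra hconst
    exact hmean.not_gt (piMean_eq_of_not_nonconstant hπ1 hconst ▸ hφ1)
  have mean_lt : piMean n π φ < φ n :=
    piMean_lt_apply_of_monotoneOn hπ hπ1 hφ (hrec.monotoneOn hν)
  have var_pos : 0 < varPi n π φ := varPi_pos hπ hπ1 hφ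
  have energy := (hgap.mul_varPi_le hπ hπ1 hφ).trans_eq (hrec.EForm_self hπ hν hν0 hlam)
  refine ⟨lam * (φ n - piMean n π φ) / varPi n π φ,
    div_pos (mul_pos hlam (sub_pos.2 mean_lt)) var_pos, ?_⟩
  rw [div_mul_eq_mul_div, div_le_iff₀ var_pos]
  linarith

theorem exists_sub_gap_le_mul_piMean (hrec : PosPartRec n π ν lam φ)
    (hπ : ∀ i ∈ Icc 1 n, 0 < π i) (hπ1 : ∑ i ∈ Icc 1 n, π i = 1)
    (hν : ∀ i ∈ Icc 1 (n - 1), 0 < ν i) (hν0 : ν 0 = 0) (hgap : IsSpectralGap n π ν gap)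
    (hlam : 0 < lam) (hφ1 : φ 1 < 0) (hmean : piMean n π φ ≤ 0) :
    ∃ c > 0, lam - gap ≤ c * piMean n π φ := by
  obtain ⟨f, hf, minimal⟩ := hgap.exists_EForm_eq hπ hπ1
  have var_pos : 0 < varPi n π f := varPi_pos hπ hπ1 hf
  obtain ⟨c, hc, energy⟩ := exists_mul_le_EForm hπ hπ1 hlam.le
    (hrec.strictMonoOn hπ hν hν0 hlam hφ1 hmean)
    (fun m hm => hrec.neg_mul_piMean_le_flux hν hν0 (by rw [mem_Icc] at hm; omega)) hf
  refine ⟨lam * c / varPi n π f, div_pos (mul_pos hlam hc) var_pos, ?_⟩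
  rw [div_mul_eq_mul_div, le_div_iff₀ var_pos]
  linarith

end PosPartRec

theorem stmt6_general {n : ℕ} {π ν φ : ℕ → ℝ} {lam gap : ℝ}
    (hπ : ∀ i ∈ Icc 1 n, 0 < π i) (hπ1 : ∑ i ∈ Icc 1 n, π i = 1)
    (hν : ∀ i ∈ Icc 1 (n - 1), 0 < ν i) (hν0 : ν 0 = 0)
    (hgap : IsSpectralGap n π ν gap) (hlam : 0 < lam) (hφ1 : φ 1 < 0)
    (hrec : PosPartRec n π ν lam φ) :
    SignType.sign (piMean n π φ) = SignType.sign (lam - gap) := by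
  have upper := hrec.exists_mul_piMean_le_sub_gap hπ hπ1 hν hν0 hgap hlam hφ1
  have lower := hrec.exists_sub_gap_le_mul_piMean hπ hπ1 hν hν0 hgap hlam hφ1
  rcases lt_trichotomy (piMean n π φ) 0 with hneg | hzero | hpos
  · obtain ⟨c, hc, hle⟩ := lower hneg.le
    rw [sign_neg hneg, sign_neg (hle.trans_lt (mul_neg_of_pos_of_neg hc hneg))]
  · obtain ⟨c, -, hle⟩ := lower hzero.le
    obtain ⟨d, -, hge⟩ := upper hzero.ge
    rw [hzero, mul_zero] at hle hge
    rw [hzero, hle.antisymm hge]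
  · obtain ⟨c, hc, hge⟩ := upper hpos.le
    rw [sign_pos hpos, sign_pos ((mul_pos hc hpos).trans_le hge)]

theorem stmt6 (n : ℕ) (hn : 3 ≤ n) (π ν : ℕ → ℝ)
    (hπ : ∀ i ∈ Finset.Icc 1 n, 0 < π i)
    (hπ1 : ∑ i ∈ Finset.Icc 1 n, π i = 1)
    (hν : ∀ i ∈ Finset.Icc 1 (n - 1), 0 < ν i)
    (hν0 : ν 0 = 0) (hνn : ν n = 0)
    (gap : ℝ) (hgap : IsSpectralGap n π ν gap) :
    ∀ lam : ℝ, 0 < lam →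
      ∀ φ : ℕ → ℝ, φ 1 = -1 → PosPartRec n π ν lam φ →
        lam ≠ gap → 0 < (lam - gap) * piMean n π φ := by
  intro lam hlam φ hφ1 hrec hne
  rw [← sign_eq_one_iff, sign_mul, stmt6_general hπ hπ1 hν hν0 hgap hlam (by simp [hφ1]) hrec,
    ← sign_mul, sign_eq_one_iff]
  exact mul_self_pos.2 (sub_ne_zero.2 hne)
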